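/- Let C ⊆ X be closed and r > 0. For every t ∈ ℝ, limsup_{n→∞} (1/n) log ∑_{i ∈ Σ^n : U(L_n[i]) ⊆ B(C,r)} s_i^t ≤ sup { t∫Λ dμ + h(μ) : μ ∈ 𝒫_S(Σ^ℕ), U μ ∈ B(C,r) }. -/

import Mathlib

open MeasureTheory Filter Topology Metric Set
open scoped ENNReal NNReal Classical

namespace Multifractal

/-- Infinite strings over `{1,…,N}`. -/
abbrev Seq (N : ℕ) := ℕ → Fin N

/-- Finite strings over `{1,…,N}` (the empty string is excluded where appropriate). -/
abbrev Word (N : ℕ) := List (Fin N)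

variable {N : ℕ}

/-- The shift map on `Σ^ℕ`. -/
def shift : Seq N → Seq N := fun x n => x (n + 1)

/-- The cylinder `[w]` generated by a finite string `w`. -/
def cylinder (w : Word N) : Set (Seq N) :=
  {x : Seq N | ∀ (k : ℕ) (h : k < w.length), x k = w.get ⟨k, h⟩}

/-- Birkhoff sum `∑_{k<n} φ(S^k x)`. -/
noncomputable def birkhoff (φ : Seq N → ℝ) (n : ℕ) (x : Seq N) : ℝ :=
  ∑ k ∈ Finset.range n, φ (shift^[k] x)

/-- `s_w = sup_{x ∈ [w]} exp (∑_{k<|w|} Λ(S^k x))`. -/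
noncomputable def sWord (Λ : Seq N → ℝ) (w : Word N) : ℝ :=
  sSup ((fun x => Real.exp (birkhoff Λ w.length x)) '' cylinder w)

/-- Bounded distortion (condition (C3)): `exp(S_nΛ(i))/exp(S_nΛ(j)) ∈ [1/c, c]`
whenever `i|n = j|n`.  (By symmetry in `i,j` the one-sided bound suffices.) -/
def BddDistortion (Λ : Seq N → ℝ) (c : ℝ) : Prop :=
  ∀ (n : ℕ) (i j : Seq N), (∀ k < n, i k = j k) →
    Real.exp (birkhoff Λ n i) ≤ c * Real.exp (birkhoff Λ n j)

/-- The empirical measure `L_n x = (1/n) ∑_{k<n} δ_{S^k x}` (junk value `δ_x` for `n = 0`). -/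
noncomputable def emp (n : ℕ) (x : Seq N) : ProbabilityMeasure (Seq N) :=
  if h : n = 0 then ⟨Measure.dirac x, inferInstance⟩
  else
    ⟨(n : ℝ≥0∞)⁻¹ • ∑ k ∈ Finset.range n, Measure.dirac (shift^[k] x), by
      constructor
      simp only [Measure.smul_apply, Measure.coe_finset_sum, Finset.sum_apply, measure_univ,
        Finset.sum_const, Finset.card_range, nsmul_eq_mul, mul_one, smul_eq_mul]
      exact ENNReal.inv_mul_cancel (Nat.cast_ne_zero.mpr h) (ENNReal.natCast_ne_top n)⟩

/-- Shift invariance of a probability measure. -/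
def Invariant (μ : ProbabilityMeasure (Seq N)) : Prop :=
  μ.toMeasure.map shift = μ.toMeasure

/-- `n`-th partition entropy `-∑_{|w|=n} μ[w] log μ[w]`. -/
noncomputable def entropyAux (μ : ProbabilityMeasure (Seq N)) (n : ℕ) : ℝ :=
  -∑ w : Fin n → Fin N,
      (μ (cylinder (List.ofFn w)) : ℝ) * Real.log (μ (cylinder (List.ofFn w)) : ℝ)

/-- The Kolmogorov–Sinai entropy of a (shift-invariant) measure on the full shift,
via the generating partition into cylinders. -/
noncomputable def entropy (μ : ProbabilityMeasure (Seq N)) : ℝ :=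
  Filter.atTop.liminf fun n => entropyAux μ n / n

/-- Abscissa of convergence of the "zeta-function" `s ↦ ∑ a_w^s`, the sum ranging over the
nonempty finite strings satisfying `P`; values in `EReal` (so `⊤` if never summable and `⊥`
if always summable, e.g. for an empty index set). -/
noncomputable def sigmaAbs (a : Word N → ℝ) (P : Word N → Prop) : EReal :=
  sInf ((fun t : ℝ => (t : EReal)) ''
    {t : ℝ | Summable fun w : {w : Word N // w ≠ [] ∧ P w} => a w.1 ^ t})

variable {X : Type*}

/-- `U(L_{|w|}[w]) ⊆ B`. -/
def inTarget (U : ProbabilityMeasure (Seq N) → X) (B : Set X) (w : Word N) : Prop :=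
  ∀ x ∈ cylinder w, U (emp w.length x) ∈ B

/-- The closed `r`-neighbourhood `B(C,r)` of a set. -/
def cball [MetricSpace X] (C : Set X) (r : ℝ) : Set X := {x | infDist x C ≤ r}

/-- The counting function `N_δ^{U,Λ}(C,r)`: number of strings `w` with `s_w ≈ δ` and
`U(L_{|w|}[w]) ⊆ B(C,r)`. -/
noncomputable def Ncount [MetricSpace X] (Λ : Seq N → ℝ) (U : ProbabilityMeasure (Seq N) → X)
    (C : Set X) (r δ : ℝ) : ℕ :=
  Set.ncard {w : Word N | w ≠ [] ∧ sWord Λ w ≤ δ ∧ δ < sWord Λ w.dropLast ∧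
    inTarget U (cball C r) w}

/-- `log m / (-log δ)`, read as `-∞` when `m = 0`. -/
noncomputable def ratioE (m : ℕ) (δ : ℝ) : EReal :=
  if m = 0 then ⊥ else (((Real.log m) / (-Real.log δ) : ℝ) : EReal)

/-- The `r`-approximate lower coarse multifractal spectrum `f̲^{U,Λ}(C,r)`. -/
noncomputable def coarseLowerR [MetricSpace X] (Λ : Seq N → ℝ)
    (U : ProbabilityMeasure (Seq N) → X) (C : Set X) (r : ℝ) : EReal :=
  Filter.liminf (fun δ : ℝ => ratioE (Ncount Λ U C r δ) δ) (𝓝[>] (0 : ℝ))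

/-- The lower coarse multifractal spectrum `f̲^{U,Λ}(C) = lim_{r↘0} f̲^{U,Λ}(C,r)`;
since `f̲^{U,Λ}(C,r)` is nondecreasing in `r`, the limit is the infimum over `r > 0`. -/
noncomputable def coarseLower [MetricSpace X] (Λ : Seq N → ℝ)
    (U : ProbabilityMeasure (Seq N) → X) (C : Set X) : EReal :=
  ⨅ (r : ℝ) (_ : 0 < r), coarseLowerR Λ U C r

/-- The variational quantity `sup { -h(μ)/∫Λ dμ : μ shift-invariant, Uμ ∈ C }`. -/
noncomputable def varSup (Λ : Seq N → ℝ) (U : ProbabilityMeasure (Seq N) → X)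
    (C : Set X) : EReal :=
  sSup {x : EReal | ∃ μ : ProbabilityMeasure (Seq N), Invariant μ ∧ U μ ∈ C ∧
    x = ((-(entropy μ) / ∫ y, Λ y ∂μ.toMeasure : ℝ) : EReal)}

end Multifractal

namespace Multifractal

/-- The finite-level sum `∑_{i ∈ Σ^n, U(L_n[i]) ⊆ B} s_i^t`. -/
noncomputable def levelSum {N : ℕ} {X : Type*} (Λ : Seq N → ℝ)
    (U : ProbabilityMeasure (Seq N) → X) (B : Set X) (t : ℝ) (n : ℕ) : ℝ :=
  ∑ i : Fin n → Fin N,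
    if inTarget U B (List.ofFn i) then sWord Λ (List.ofFn i) ^ t else 0

/-- `(log x)/n` as an extended real, read as `-∞` when `x ≤ 0` (i.e. when the sum is empty). -/
noncomputable def logDivE (x : ℝ) (n : ℕ) : EReal :=
  if 0 < x then ((Real.log x / n : ℝ) : EReal) else ⊥

/-! Since `Λ` is continuous and cylinders are compact, `s_w` is attained on `[w]`, so the level sum
is at most a partition sum of `ψ = t Λ` over orbits whose empirical measures lie in the compact set
`U⁻¹(B)`. The growth rate of a finite sum is the largest of the rates of its terms, so it suffices
to bound the rate near each `μ` in this set.

If `μ` is not invariant, a coboundary has a nonzero integral against `μ` but Birkhoff averages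
tending uniformly to zero, and no long orbit is distributed close to `μ`. If `μ` is invariant, pick
`k` and a positive law `q` on `k`-blocks whose cross entropy `-∫ log q(x₁…x_k) dμ / k` is close to
`h(μ)`. For empirical measures near `μ` the Birkhoff sum of `ψ` exceeds that of
`log q(x₁…x_k) / k` by at most `n (∫ ψ dμ + h(μ) + ε)`, while the partition sum of the latter
potential is bounded: by convexity of `exp` its exponential is at most the average, over the `k`
offsets of a grid of disjoint `k`-blocks, of the product of `q` over the blocks of the grid, and
these products sum to a constant because `q` is a probability vector. -/

section FiniteDistributions

variable {ι : Type*} [Fintype ι] {p : ι → ℝ}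

theorem card_pos_of_mem_stdSimplex (hp : p ∈ stdSimplex ℝ ι) : 0 < Fintype.card ι := by
  by_contra! h
  have := Fintype.card_eq_zero_iff.1 (Nat.le_zero.1 h)
  simpa using hp.2

theorem sum_negMulLog_le_log_card (hp : p ∈ stdSimplex ℝ ι) :
    ∑ i, Real.negMulLog (p i) ≤ Real.log (Fintype.card ι) := by
  have hcard : (0 : ℝ) < Fintype.card ι := Nat.cast_pos.2 (card_pos_of_mem_stdSimplex hp)
  have hJensen := Real.concaveOn_negMulLog.le_map_sum (t := Finset.univ)
    (w := fun _ => (Fintype.card ι : ℝ)⁻¹) (p := p)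
    (fun _ _ => by positivity) (by simp [hcard.ne']) (fun i _ => hp.1 i)
  simp only [smul_eq_mul, ← Finset.mul_sum, hp.2, mul_one] at hJensen
  rw [Real.negMulLog, Real.log_inv, neg_mul_neg] at hJensen
  exact le_of_mul_le_mul_left hJensen (inv_pos.2 hcard)

/-- Mixing `p` with a little of the uniform distribution makes it positive
at an arbitrarily small cost in cross entropy. -/
theorem exists_pos_mem_stdSimplex_le_sum_mul_log (hp : p ∈ stdSimplex ℝ ι) {d : ℝ} (hd : 0 < d) :
    ∃ q ∈ stdSimplex ℝ ι, (∀ i, 0 < q i) ∧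
      -(∑ i, Real.negMulLog (p i) + d) ≤ ∑ i, p i * Real.log (q i) := by
  have hcard : (0 : ℝ) < Fintype.card ι := Nat.cast_pos.2 (card_pos_of_mem_stdSimplex hp)
  have hθ : Real.exp (-d) < 1 := by simpa using hd
  set q : ι → ℝ := fun i => Real.exp (-d) * p i + (1 - Real.exp (-d)) * (Fintype.card ι : ℝ)⁻¹
  have hmix : ∀ i, Real.exp (-d) * p i ≤ q i := fun i =>
    le_add_of_nonneg_right (mul_nonneg (by linarith) (by positivity))
  have hq : ∀ i, 0 < q i := fun i =>
    add_pos_of_nonneg_of_pos (mul_nonneg (Real.exp_nonneg _) (hp.1 i))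
      (mul_pos (by linarith) (by positivity))
  refine ⟨q, ⟨fun i => (hq i).le, ?_⟩, hq, ?_⟩
  · simp only [q, Finset.sum_add_distrib, ← Finset.mul_sum, hp.2, Finset.sum_const,
      Finset.card_univ, nsmul_eq_mul, mul_inv_cancel₀ hcard.ne']
    ring
  have hterm : ∀ i, -(Real.negMulLog (p i) + p i * d) ≤ p i * Real.log (q i) := by
    intro i
    rcases (hp.1 i).eq_or_lt with hzero | hpos
    · simp [← hzero]
    have hlog := Real.log_le_log (mul_pos (Real.exp_pos _) hpos) (hmix i)
    rw [Real.log_mul (Real.exp_ne_zero _) hpos.ne', Real.log_exp] at hlog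
    calc -(Real.negMulLog (p i) + p i * d) = p i * (-d + Real.log (p i)) := by
          rw [Real.negMulLog]; ring
      _ ≤ p i * Real.log (q i) := mul_le_mul_of_nonneg_left hlog hpos.le
  calc -(∑ i, Real.negMulLog (p i) + d) = ∑ i, -(Real.negMulLog (p i) + p i * d) := by
        rw [Finset.sum_neg_distrib, Finset.sum_add_distrib, ← Finset.sum_mul, hp.2, one_mul]
    _ ≤ ∑ i, p i * Real.log (q i) := Finset.sum_le_sum fun i _ => hterm i

end FiniteDistributions

section Blocks

variable {A : Type*} [Fintype A] {k m n : ℕ}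

theorem sum_comp_embedding {ι κ : Type*} [Fintype ι] [Fintype κ] [DecidableEq ι] [DecidableEq κ]
    (e : ι ↪ κ) (F : (ι → A) → ℝ) :
    ∑ w : κ → A, F (w ∘ e) =
      (Fintype.card A : ℝ) ^ (Fintype.card κ - Fintype.card ι) * ∑ v : ι → A, F v := by
  let e' : ι ≃ {i // i ∈ Set.range e} := Equiv.ofInjective e e.injective
  let split : (κ → A) ≃ (ι → A) × ({i // i ∉ Set.range e} → A) :=
    (Equiv.piEquivPiSubtypeProd (· ∈ Set.range e) fun _ => A).trans
      ((e'.symm.arrowCongr (Equiv.refl A)).prodCongr (Equiv.refl _))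
  have hcard : Fintype.card {i // i ∉ Set.range e} = Fintype.card κ - Fintype.card ι := by
    rw [Fintype.card_subtype_compl, Fintype.card_congr e']
  calc ∑ w : κ → A, F (w ∘ e) = ∑ x : (ι → A) × ({i // i ∉ Set.range e} → A), F x.1 :=
        split.sum_comp fun x => F x.1
    _ = _ := by
        simp only [Fintype.sum_prod_type_right]
        rw [Finset.sum_const, nsmul_eq_mul, Finset.card_univ,
          Fintype.card_fun, hcard, Nat.cast_pow]

theorem sum_prod_comp_embedding {κ : Type*} [Fintype κ] [DecidableEq κ] (e : Fin m × Fin k ↪ κ)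
    (q : (Fin k → A) → ℝ) :
    ∑ w : κ → A, ∏ l, q (fun i => w (e (l, i))) =
      (Fintype.card A : ℝ) ^ (Fintype.card κ - m * k) * (∑ u, q u) ^ m := by
  rw [Fintype.sum_pow, ← (Equiv.curry (Fin m) (Fin k) A).sum_comp]
  refine (sum_comp_embedding e fun v => ∏ l, q (Function.curry v l)).trans ?_
  simp only [Fintype.card_prod, Fintype.card_fin, Equiv.curry_apply]

/-- The `m` consecutive blocks of length `k` starting at position `j < k`: the pair `(l, i)` is sent
to the `i`-th position of the `l`-th block. -/
def blockEmbedding (h : (m + 1) * k ≤ n) (j : Fin k) : Fin m × Fin k ↪ Fin n :=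
  finProdFinEquiv.toEmbedding.trans
    ((Fin.natAddEmb j).trans (Fin.castLEEmb (by have := j.isLt; linarith)))

theorem blockEmbedding_val (h : (m + 1) * k ≤ n) (j : Fin k) (l : Fin m) (i : Fin k) :
    (blockEmbedding h j (l, i) : ℕ) = j + (i + k * l) := rfl

theorem exp_sum_div_le {g : ℕ → ℝ} (hg : ∀ i, g i ≤ 0) (hk : k ≠ 0) (h : m * k ≤ n) :
    Real.exp ((∑ i ∈ Finset.range n, g i) / k) ≤
      (∑ j : Fin k, ∏ l : Fin m, Real.exp (g (j + k * l))) / k := by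
  have hk' : (0 : ℝ) < k := by positivity
  have hdrop : ∑ i ∈ Finset.range n, g i ≤ ∑ j : Fin k, ∑ l : Fin m, g (j + k * l) :=
    calc ∑ i ∈ Finset.range n, g i ≤ ∑ i ∈ Finset.range (m * k), g i :=
          Finset.sum_anti_set_of_nonpos' hg (by simpa using h)
      _ = ∑ j : Fin k, ∑ l : Fin m, g (j + k * l) := by
          rw [Finset.sum_range, ← finProdFinEquiv.sum_comp, Fintype.sum_prod_type_right]
          rfl
  have hJensen := convexOn_exp.map_sum_le (t := Finset.univ) (w := fun _ : Fin k => (k : ℝ)⁻¹)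
    (p := fun j => ∑ l : Fin m, g (j + k * l))
    (fun _ _ => by positivity) (by simp [hk'.ne']) (fun _ _ => Set.mem_univ _)
  simp only [smul_eq_mul, inv_mul_eq_div, ← Finset.sum_div] at hJensen
  simp only [← Real.exp_sum]
  exact (Real.exp_le_exp.2 (by gcongr)).trans hJensen

end Blocks

section Cylinders

variable {N : ℕ}

/-- The string of the first `k` letters of `x`; its fibres are the cylinders of length `k`. -/
def prefixWord (k : ℕ) (x : Seq N) : Fin k → Fin N := fun i => x i

theorem cylinder_ofFn {n : ℕ} (w : Fin n → Fin N) :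
    cylinder (List.ofFn w) = prefixWord n ⁻¹' {w} := by
  ext x
  simp [cylinder, prefixWord, funext_iff, Fin.forall_iff]

theorem continuous_prefixWord (k : ℕ) : Continuous (prefixWord k : Seq N → Fin k → Fin N) :=
  continuous_pi fun i => continuous_apply (i : ℕ)

theorem continuous_shift : Continuous (shift : Seq N → Seq N) :=
  continuous_pi fun n => continuous_apply (n + 1)

theorem shift_iterate_apply (n : ℕ) (x : Seq N) (i : ℕ) : shift^[n] x i = x (n + i) := by
  induction n generalizing x with
  | zero => simp
  | succ n ih => rw [Function.iterate_succ_apply, ih, shift, add_right_comm]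

theorem continuous_birkhoff {φ : Seq N → ℝ} (hφ : Continuous φ) (n : ℕ) :
    Continuous (birkhoff φ n) :=
  continuous_finsetSum _ fun k _ => hφ.comp (continuous_shift.iterate k)

theorem exists_prefixWord_eq_sWord_eq {Λ : Seq N → ℝ} (hΛ : Continuous Λ) {n : ℕ} (hn : n ≠ 0)
    (w : Fin n → Fin N) :
    ∃ x, prefixWord n x = w ∧ sWord Λ (List.ofFn w) = Real.exp (birkhoff Λ n x) := by
  have hcompact : IsCompact (cylinder (List.ofFn w)) := by
    rw [cylinder_ofFn]
    exact ((isClosed_discrete {w}).preimage (continuous_prefixWord n)).isCompact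
  have hnonempty : (cylinder (List.ofFn w)).Nonempty := by
    refine ⟨fun i => if h : i < n then w ⟨i, h⟩ else w ⟨0, Nat.pos_of_ne_zero hn⟩, ?_⟩
    rw [cylinder_ofFn]
    ext i
    simp [prefixWord]
  obtain ⟨x, hx, hsup⟩ := hcompact.exists_sSup_image_eq hnonempty
    (Real.continuous_exp.comp (continuous_birkhoff hΛ n)).continuousOn
  rw [cylinder_ofFn] at hx
  exact ⟨x, hx, by simpa [sWord] using hsup⟩

end Cylinders

section Entropy

variable {N : ℕ} {k : ℕ}

/-- The distribution of the first `k` letters under `μ`, as a point of the standard simplex. -/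
def cylinderLaw (μ : ProbabilityMeasure (Seq N)) (k : ℕ) (u : Fin k → Fin N) : ℝ :=
  μ (cylinder (List.ofFn u))

theorem integral_comp_prefixWord (μ : ProbabilityMeasure (Seq N)) (g : (Fin k → Fin N) → ℝ) :
    ∫ x, g (prefixWord k x) ∂μ.toMeasure = ∑ u, cylinderLaw μ k u * g u := by
  have hmeas : Measurable (prefixWord k : Seq N → Fin k → Fin N) :=
    (continuous_prefixWord k).measurable
  have := Measure.isProbabilityMeasure_map (μ := μ.toMeasure) hmeas.aemeasurable
  rw [← integral_map hmeas.aemeasurable (f := g) Measurable.of_discrete.aestronglyMeasurable,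
    integral_fintype Integrable.of_finite]
  refine Finset.sum_congr rfl fun u _ => ?_
  rw [smul_eq_mul, map_measureReal_apply hmeas (measurableSet_singleton u), ← cylinder_ofFn]
  rfl

theorem cylinderLaw_mem_stdSimplex (μ : ProbabilityMeasure (Seq N)) (k : ℕ) :
    cylinderLaw μ k ∈ stdSimplex ℝ (Fin k → Fin N) :=
  ⟨fun _ => NNReal.coe_nonneg _, by simpa using (integral_comp_prefixWord μ fun _ => 1).symm⟩

theorem entropyAux_eq_sum_negMulLog (μ : ProbabilityMeasure (Seq N)) (k : ℕ) :
    entropyAux μ k = ∑ u, Real.negMulLog (cylinderLaw μ k u) := by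
  simp [entropyAux, Real.negMulLog, cylinderLaw]

theorem entropyAux_le (μ : ProbabilityMeasure (Seq N)) (k : ℕ) :
    entropyAux μ k ≤ k * Real.log N := by
  rw [entropyAux_eq_sum_negMulLog]
  simpa using sum_negMulLog_le_log_card (cylinderLaw_mem_stdSimplex μ k)

theorem exists_entropyAux_lt (μ : ProbabilityMeasure (Seq N)) {b : ℝ} (hb : entropy μ < b) :
    ∃ k : ℕ, 0 < k ∧ entropyAux μ k < k * b := by
  have hbound : ∀ᶠ n : ℕ in atTop, entropyAux μ n / n ≤ Real.log N := by
    filter_upwards [eventually_gt_atTop 0] with n hn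
    rw [div_le_iff₀' (Nat.cast_pos.2 hn)]
    exact entropyAux_le μ n
  obtain ⟨k, hlt, hk⟩ := ((frequently_lt_of_liminf_lt
    (IsCoboundedUnder.of_frequently_le hbound.frequently) hb).and_eventually
    (eventually_gt_atTop 0)).exists
  exact ⟨k, hk, (div_lt_iff₀' (Nat.cast_pos.2 hk)).1 hlt⟩

/-- The per-letter log-likelihood of the first `k` letters when blocks of length `k` are drawn
according to `q`. -/
noncomputable def blockPotential (q : (Fin k → Fin N) → ℝ) (x : Seq N) : ℝ :=
  Real.log (q (prefixWord k x)) / k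

theorem continuous_blockPotential (q : (Fin k → Fin N) → ℝ) : Continuous (blockPotential q) :=
  (continuous_of_discreteTopology (f := fun u => Real.log (q u) / k)).comp
    (continuous_prefixWord k)

theorem exists_neg_integral_blockPotential_lt (μ : ProbabilityMeasure (Seq N)) {b : ℝ}
    (hb : entropy μ < b) :
    ∃ k : ℕ, 0 < k ∧ ∃ q ∈ stdSimplex ℝ (Fin k → Fin N), (∀ u, 0 < q u) ∧
      -∫ x, blockPotential q x ∂μ.toMeasure < b := by
  obtain ⟨k, hk, hkb⟩ := exists_entropyAux_lt μ hb
  obtain ⟨q, hq, hqpos, hcross⟩ := exists_pos_mem_stdSimplex_le_sum_mul_log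
    (cylinderLaw_mem_stdSimplex μ k) (half_pos (sub_pos.2 hkb))
  refine ⟨k, hk, q, hq, hqpos, ?_⟩
  rw [← entropyAux_eq_sum_negMulLog, ← integral_comp_prefixWord μ fun u => Real.log (q u)]
    at hcross
  simp only [blockPotential, integral_div]
  rw [neg_lt, lt_div_iff₀ (Nat.cast_pos.2 hk)]
  linarith

end Entropy

section EmpiricalMeasures

variable {N : ℕ}

theorem integrable_of_continuous {Ω : Type*} [TopologicalSpace Ω] [CompactSpace Ω]
    [MeasurableSpace Ω] [OpensMeasurableSpace Ω] {f : Ω → ℝ}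
    (hf : Continuous f) (μ : Measure Ω) [IsFiniteMeasure μ] : Integrable f μ :=
  hf.integrable_of_hasCompactSupport (HasCompactSupport.of_compactSpace f)

theorem continuous_integral {Ω : Type*} [TopologicalSpace Ω] [CompactSpace Ω]
    [MeasurableSpace Ω] [OpensMeasurableSpace Ω] {f : Ω → ℝ} (hf : Continuous f) :
    Continuous fun μ : ProbabilityMeasure Ω => ∫ x, f x ∂μ.toMeasure :=
  ProbabilityMeasure.continuous_integral_continuousMap (⟨f, hf⟩ : C(Ω, ℝ))

theorem integral_emp {f : Seq N → ℝ} (hf : Continuous f) {n : ℕ} (hn : n ≠ 0) (x : Seq N) :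
    ∫ y, f y ∂(emp n x).toMeasure = birkhoff f n x / n := by
  have hemp : (emp n x).toMeasure =
      (n : ℝ≥0∞)⁻¹ • ∑ k ∈ Finset.range n, Measure.dirac (shift^[k] x) := by
    simp [emp, hn]
  rw [hemp, integral_smul_measure,
    integral_finsetSum_measure fun _ _ => integrable_of_continuous hf _]
  simp [birkhoff, integral_dirac, div_eq_inv_mul]

theorem exists_integral_comp_shift_ne {μ : ProbabilityMeasure (Seq N)} (hμ : ¬Invariant μ) :
    ∃ g : BoundedContinuousFunction (Seq N) ℝ,
      ∫ x, g (shift x) ∂μ.toMeasure ≠ ∫ x, g x ∂μ.toMeasure := by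
  have hshift : Measurable (shift : Seq N → Seq N) := continuous_shift.measurable
  have := Measure.isProbabilityMeasure_map (μ := μ.toMeasure) hshift.aemeasurable
  by_contra! h
  refine hμ (ext_of_forall_integral_eq_of_IsFiniteMeasure fun g => ?_)
  rw [integral_map hshift.aemeasurable g.continuous.aestronglyMeasurable]
  exact h g

theorem abs_birkhoff_comp_shift_sub_le (g : BoundedContinuousFunction (Seq N) ℝ) (n : ℕ)
    (x : Seq N) : |birkhoff (fun y => g (shift y) - g y) n x| ≤ 2 * ‖g‖ := by
  have htelescope : birkhoff (fun y => g (shift y) - g y) n x = g (shift^[n] x) - g x := by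
    simp only [birkhoff, ← Function.iterate_succ_apply']
    exact Finset.sum_range_sub (fun i => g (shift^[i] x)) n
  rw [htelescope]
  exact g.dist_le_two_norm _ _

/-- A coboundary `g ∘ shift - g` whose integral against `μ` is nonzero separates `μ` from the
empirical measures, since its Birkhoff averages tend to zero uniformly. -/
theorem exists_nhds_emp_notMem {μ : ProbabilityMeasure (Seq N)} (hμ : ¬Invariant μ) :
    ∃ V ∈ 𝓝 μ, ∀ᶠ n : ℕ in atTop, ∀ x, emp n x ∉ V := by
  obtain ⟨g, hg⟩ := exists_integral_comp_shift_ne hμ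
  have hg_shift : Continuous fun x => g (shift x) := g.continuous.comp continuous_shift
  have hcont : Continuous fun x => g (shift x) - g x := hg_shift.sub g.continuous
  obtain ⟨δ, hδ, hδμ⟩ : ∃ δ > 0, δ < |∫ x, (g (shift x) - g x) ∂μ.toMeasure| := by
    refine exists_between (abs_pos.2 ?_)
    rw [integral_sub (integrable_of_continuous hg_shift _)
      (integrable_of_continuous g.continuous _)]
    exact sub_ne_zero.2 hg
  refine ⟨{ν | δ < |∫ x, (g (shift x) - g x) ∂ν.toMeasure|},
    (isOpen_lt continuous_const (continuous_integral hcont).abs).mem_nhds hδμ, ?_⟩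
  have hlarge : ∀ᶠ n : ℕ in atTop, 2 * ‖g‖ / δ < n :=
    tendsto_natCast_atTop_atTop.eventually_gt_atTop _
  filter_upwards [hlarge, eventually_gt_atTop 0] with n hn hn0 x
  have hn' : (0 : ℝ) < n := Nat.cast_pos.2 hn0
  rw [not_lt, integral_emp hcont hn0.ne', abs_div, abs_of_pos hn', div_le_iff₀ hn']
  exact (abs_birkhoff_comp_shift_sub_le g n x).trans ((div_lt_iff₀' hδ).1 hn).le

end EmpiricalMeasures

section PartitionSums

variable {N : ℕ} {k m n : ℕ}

/-- The partition sum `Z_n(ψ, V) = ∑_w sup {exp (S_n ψ(x)) : x ∈ [w], L_n x ∈ V}` over the words `w`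
of length `n`, whose growth rate is the pressure of `ψ` restricted to orbits that are distributed
according to `V`; cylinders without such an `x` contribute `0`. -/
noncomputable def partitionSum (ψ : Seq N → ℝ) (V : Set (ProbabilityMeasure (Seq N))) (n : ℕ) :
    ℝ≥0∞ :=
  ∑ w : Fin n → Fin N, ⨆ x ∈ {x | prefixWord n x = w ∧ emp n x ∈ V},
    ENNReal.ofReal (Real.exp (birkhoff ψ n x))

theorem partitionSum_mono (ψ : Seq N → ℝ) {V W : Set (ProbabilityMeasure (Seq N))} (h : V ⊆ W) :
    partitionSum ψ V ≤ partitionSum ψ W := fun _ =>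
  Finset.sum_le_sum fun _ _ => biSup_mono fun _ hx => ⟨hx.1, h hx.2⟩

theorem partitionSum_union_le (ψ : Seq N → ℝ) (V W : Set (ProbabilityMeasure (Seq N))) :
    partitionSum ψ (V ∪ W) ≤ partitionSum ψ V + partitionSum ψ W := by
  intro n
  rw [Pi.add_apply, partitionSum, partitionSum, partitionSum, ← Finset.sum_add_distrib]
  refine Finset.sum_le_sum fun w _ => iSup₂_le fun x hx => ?_
  rcases hx.2 with hV | hW
  · exact le_add_of_le_left
      (le_biSup (fun x => ENNReal.ofReal (Real.exp (birkhoff ψ n x))) ⟨hx.1, hV⟩)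
  · exact le_add_of_le_right
      (le_biSup (fun x => ENNReal.ofReal (Real.exp (birkhoff ψ n x))) ⟨hx.1, hW⟩)

theorem partitionSum_eq_zero {ψ : Seq N → ℝ} {V : Set (ProbabilityMeasure (Seq N))}
    (h : ∀ x, emp n x ∉ V) : partitionSum ψ V n = 0 := by
  simp [partitionSum, h]

theorem partitionSum_le_sum {ψ : Seq N → ℝ} {V : Set (ProbabilityMeasure (Seq N))}
    {F : (Fin n → Fin N) → ℝ} (hF : ∀ w, 0 ≤ F w)
    (h : ∀ x, Real.exp (birkhoff ψ n x) ≤ F (prefixWord n x)) :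
    partitionSum ψ V n ≤ ENNReal.ofReal (∑ w, F w) := by
  rw [ENNReal.ofReal_sum_of_nonneg fun w _ => hF w]
  exact Finset.sum_le_sum fun w _ => iSup₂_le fun x hx =>
    ENNReal.ofReal_le_ofReal (hx.1 ▸ h x)

theorem partitionSum_le_of_integral_le {ψ ψ' : Seq N → ℝ} (hψ : Continuous ψ)
    (hψ' : Continuous ψ') {V : Set (ProbabilityMeasure (Seq N))} {a : ℝ}
    (h : ∀ ν ∈ V, ∫ x, ψ x ∂ν.toMeasure ≤ a + ∫ x, ψ' x ∂ν.toMeasure) (hn : n ≠ 0) :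
    partitionSum ψ V n ≤ ENNReal.ofReal (Real.exp (a * n)) * partitionSum ψ' V n := by
  have hn' : (0 : ℝ) < n := by positivity
  rw [partitionSum, partitionSum, Finset.mul_sum]
  refine Finset.sum_le_sum fun w _ => iSup₂_le fun x hx => ?_
  have hbirkhoff : birkhoff ψ n x ≤ a * n + birkhoff ψ' n x := by
    have := h _ hx.2
    rwa [integral_emp hψ hn, integral_emp hψ' hn, div_le_iff₀ hn', add_mul,
      div_mul_cancel₀ _ hn'.ne'] at this
  calc ENNReal.ofReal (Real.exp (birkhoff ψ n x))
      ≤ ENNReal.ofReal (Real.exp (a * n)) * ENNReal.ofReal (Real.exp (birkhoff ψ' n x)) := by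
        rw [← ENNReal.ofReal_mul (Real.exp_nonneg _), ← Real.exp_add]
        gcongr
    _ ≤ _ := mul_le_mul_right
        (le_biSup (fun x => ENNReal.ofReal (Real.exp (birkhoff ψ' n x))) hx) _

theorem exp_birkhoff_blockPotential_le {q : (Fin k → Fin N) → ℝ}
    (hq : q ∈ stdSimplex ℝ (Fin k → Fin N)) (hqpos : ∀ u, 0 < q u) (hk : k ≠ 0)
    (h : (m + 1) * k ≤ n) (x : Seq N) :
    Real.exp (birkhoff (blockPotential q) n x) ≤
      (∑ j, ∏ l, q (fun i => prefixWord n x (blockEmbedding h j (l, i)))) / k := by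
  have hlog : ∀ i, Real.log (q (prefixWord k (shift^[i] x))) ≤ 0 := fun i =>
    Real.log_nonpos (hqpos _).le (mem_Icc_of_mem_stdSimplex hq _).2
  have hblock (j : Fin k) (l : Fin m) : prefixWord k (shift^[j + k * l] x) =
      fun i => prefixWord n x (blockEmbedding h j (l, i)) := by
    ext i
    simp only [prefixWord, shift_iterate_apply, blockEmbedding_val, add_assoc,
      add_comm (i : ℕ)]
  simpa only [birkhoff, blockPotential, ← Finset.sum_div, Real.exp_log (hqpos _), hblock] using
    exp_sum_div_le hlog hk (show m * k ≤ n by linarith)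

theorem partitionSum_blockPotential_le {q : (Fin k → Fin N) → ℝ}
    (hq : q ∈ stdSimplex ℝ (Fin k → Fin N)) (hqpos : ∀ u, 0 < q u) (hk : k ≠ 0) (hN : 0 < N)
    (V : Set (ProbabilityMeasure (Seq N))) (hn : k ≤ n) :
    partitionSum (blockPotential q) V n ≤ ENNReal.ofReal (N ^ (2 * k)) := by
  obtain ⟨m, hm⟩ : ∃ m, n / k = m + 1 :=
    Nat.exists_eq_add_one.2 (Nat.div_pos hn (Nat.pos_of_ne_zero hk))
  have hle : (m + 1) * k ≤ n := hm ▸ Nat.div_mul_le_self n k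
  have hrest : n - m * k ≤ 2 * k := by
    have := Nat.lt_div_mul_add (a := n) (Nat.pos_of_ne_zero hk)
    rw [hm] at this
    grind
  refine (partitionSum_le_sum
    (F := fun w => (∑ j, ∏ l, q (fun i => w (blockEmbedding hle j (l, i)))) / k) (fun w => ?_)
    (exp_birkhoff_blockPotential_le hq hqpos hk hle)).trans (ENNReal.ofReal_le_ofReal ?_)
  · exact div_nonneg (Finset.sum_nonneg fun j _ => Finset.prod_nonneg fun l _ => (hqpos _).le)
      k.cast_nonneg
  rw [← Finset.sum_div, Finset.sum_comm]
  simp only [sum_prod_comp_embedding, hq.2, one_pow, mul_one, Fintype.card_fin, Finset.sum_const,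
    Finset.card_univ, nsmul_eq_mul]
  rw [mul_div_cancel_left₀ _ (Nat.cast_ne_zero.2 hk)]
  exact pow_le_pow_right₀ (Nat.one_le_cast.2 hN) hrest

end PartitionSums

section Growth

open ExpGrowth

variable {N : ℕ} {ψ : Seq N → ℝ} {K : Set (ProbabilityMeasure (Seq N))}

theorem exists_nhds_expGrowthSup_partitionSum_le (hψ : Continuous ψ)
    {μ : ProbabilityMeasure (Seq N)} {a : ℝ} (ha : ∫ x, ψ x ∂μ.toMeasure + entropy μ < a) :
    ∃ V ∈ 𝓝 μ, expGrowthSup (partitionSum ψ V) ≤ a := by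
  obtain ⟨x⟩ := nonempty_of_isProbabilityMeasure μ.toMeasure
  have hN : 0 < N := (x 0).pos
  obtain ⟨k, hk, q, hq, hqpos, hμ⟩ :=
    exists_neg_integral_blockPotential_lt μ (lt_sub_iff_add_lt'.2 ha)
  have hq_cont := continuous_blockPotential q
  set V : Set (ProbabilityMeasure (Seq N)) :=
    {ν | ∫ x, ψ x ∂ν.toMeasure < a + ∫ x, blockPotential q x ∂ν.toMeasure}
  have hV : V ∈ 𝓝 μ := by
    have hμV : μ ∈ V := by simp only [V, mem_ofPred_eq]; linarith
    exact (isOpen_lt (continuous_integral hψ)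
      (continuous_const.add (continuous_integral hq_cont))).mem_nhds hμV
  have hbound : ∀ᶠ n in atTop, partitionSum ψ V n ≤
      ENNReal.ofReal (N ^ (2 * k)) * EReal.exp (a * (n : EReal)) := by
    filter_upwards [eventually_ge_atTop k] with n hn
    refine (partitionSum_le_of_integral_le hψ hq_cont (fun ν hν => le_of_lt hν)
      (hk.trans_le hn).ne').trans ?_
    rw [mul_comm, ← EReal.exp_coe]
    push_cast
    gcongr
    exact partitionSum_blockPotential_le hq hqpos hk.ne' hN V hn
  refine ⟨V, hV, ?_⟩
  rw [← expGrowthSup_exp (a := (a : EReal))]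
  exact expGrowthSup_le_of_eventually_le ENNReal.ofReal_ne_top hbound

theorem expGrowthSup_partitionSum_le_of_forall_nhds (hK : IsCompact K) {b : EReal}
    (h : ∀ μ ∈ K, ∃ V ∈ 𝓝 μ, expGrowthSup (partitionSum ψ V) ≤ b) :
    expGrowthSup (partitionSum ψ K) ≤ b := by
  refine hK.induction_on (p := fun V => expGrowthSup (partitionSum ψ V) ≤ b) ?_ ?_ ?_ ?_
  · have hempty : partitionSum ψ ∅ = 0 := funext fun n => partitionSum_eq_zero (by simp)
    rw [hempty, expGrowthSup_zero]
    exact bot_le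
  · exact fun V W hVW hW => (expGrowthSup_monotone (partitionSum_mono ψ hVW)).trans hW
  · intro V W hV hW
    refine (expGrowthSup_monotone (partitionSum_union_le ψ V W)).trans ?_
    rw [expGrowthSup_add]
    exact sup_le hV hW
  · exact fun μ hμ => (h μ hμ).imp fun V hV => ⟨mem_nhdsWithin_of_mem_nhds hV.1, hV.2⟩

theorem expGrowthSup_partitionSum_le (hψ : Continuous ψ) (hK : IsClosed K) :
    expGrowthSup (partitionSum ψ K) ≤
      sSup {x : EReal | ∃ μ : ProbabilityMeasure (Seq N), Invariant μ ∧ μ ∈ K ∧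
        x = ((∫ y, ψ y ∂μ.toMeasure + entropy μ : ℝ) : EReal)} := by
  refine le_of_forall_gt_imp_ge_of_dense fun b hb => ?_
  refine expGrowthSup_partitionSum_le_of_forall_nhds hK.isCompact fun μ hμK => ?_
  by_cases hμ : Invariant μ
  · have hμb : ((∫ y, ψ y ∂μ.toMeasure + entropy μ : ℝ) : EReal) < b :=
      (le_sSup (by exact ⟨μ, hμ, hμK, rfl⟩)).trans_lt hb
    obtain ⟨a, hμa, hab⟩ := EReal.lt_iff_exists_real_btwn.1 hμb
    obtain ⟨V, hV, hgrowth⟩ :=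
      exists_nhds_expGrowthSup_partitionSum_le hψ (EReal.coe_lt_coe_iff.1 hμa)
    exact ⟨V, hV, hgrowth.trans hab.le⟩
  · obtain ⟨V, hV, hempty⟩ := exists_nhds_emp_notMem hμ
    have hzero : partitionSum ψ V =ᶠ[atTop] 0 := hempty.mono fun n hn => partitionSum_eq_zero hn
    exact ⟨V, hV, by rw [expGrowthSup_congr hzero, expGrowthSup_zero]; exact bot_le⟩

end Growth

section LevelSums

open ExpGrowth

variable {N : ℕ} {X : Type*}

theorem limsup_logDivE_eq (u : ℕ → ℝ) :
    limsup (fun n => logDivE (u n) n) atTop = expGrowthSup fun n => ENNReal.ofReal (u n) := by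
  refine limsup_congr ?_
  filter_upwards [eventually_gt_atTop 0] with n hn
  rw [logDivE, ENNReal.log_ofReal]
  split_ifs with hpos hneg hneg
  · linarith
  · rfl
  · rw [EReal.bot_div_of_pos_ne_top (by exact_mod_cast hn) (EReal.natCast_ne_top n)]
  · linarith

theorem levelSum_le_partitionSum {Λ : Seq N → ℝ} (hΛ : Continuous Λ)
    (U : ProbabilityMeasure (Seq N) → X) (B : Set X) (t : ℝ) {n : ℕ} (hn : n ≠ 0) :
    ENNReal.ofReal (levelSum Λ U B t n) ≤ partitionSum (fun x => t * Λ x) (U ⁻¹' B) n := by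
  have hnonneg (w : Word N) : 0 ≤ sWord Λ w :=
    Real.sSup_nonneg (forall_mem_image.2 fun _ _ => Real.exp_nonneg _)
  rw [levelSum, ENNReal.ofReal_sum_of_nonneg fun w _ =>
    ite_nonneg (Real.rpow_nonneg (hnonneg _) t) le_rfl]
  refine Finset.sum_le_sum fun w _ => ?_
  split_ifs with hw
  · obtain ⟨x, hx, hsup⟩ := exists_prefixWord_eq_sWord_eq hΛ hn w
    have hmem : U (emp n x) ∈ B := by
      have := hw x (by rw [cylinder_ofFn]; exact hx)
      rwa [List.length_ofFn] at this
    have hpow : sWord Λ (List.ofFn w) ^ t = Real.exp (birkhoff (fun x => t * Λ x) n x) := by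
      rw [hsup, ← Real.exp_mul, mul_comm, birkhoff, birkhoff, Finset.mul_sum]
    rw [hpow]
    exact le_biSup (fun x => ENNReal.ofReal (Real.exp (birkhoff (fun x => t * Λ x) n x)))
      ⟨hx, hmem⟩
  · simp

theorem isClosed_cball [MetricSpace X] (C : Set X) (r : ℝ) : IsClosed (cball C r) :=
  isClosed_le (continuous_infDist_pt C) continuous_const

end LevelSums

theorem limsup_levelSum_le_general {N : ℕ} {X : Type*} [TopologicalSpace X] {Λ : Seq N → ℝ}
    (hΛ : Continuous Λ) {U : ProbabilityMeasure (Seq N) → X} (hU : Continuous U) {B : Set X}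
    (hB : IsClosed B) (t : ℝ) :
    limsup (fun n : ℕ => logDivE (levelSum Λ U B t n) n) atTop
      ≤ sSup {x : EReal | ∃ μ : ProbabilityMeasure (Seq N), Invariant μ ∧ U μ ∈ B ∧
          x = ((t * ∫ y, Λ y ∂μ.toMeasure + entropy μ : ℝ) : EReal)} := by
  have hle : ∀ᶠ n in atTop, ENNReal.ofReal (levelSum Λ U B t n) ≤
      partitionSum (fun x => t * Λ x) (U ⁻¹' B) n := by
    filter_upwards [eventually_ne_atTop 0] with n hn
    exact levelSum_le_partitionSum hΛ U B t hn
  simpa only [limsup_logDivE_eq, integral_const_mul, mem_preimage] using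
    (ExpGrowth.expGrowthSup_eventually_monotone hle).trans
      (expGrowthSup_partitionSum_le (continuous_const.mul hΛ) (hB.preimage hU))

/-- **Theorem 5.2.** For all `t ∈ ℝ`,
`limsup_n (1/n) log ∑_{|i|=n, U(L_n[i]) ⊆ B(C,r)} s_i^t ≤
  sup { t∫Λdμ + h(μ) : μ invariant, Uμ ∈ B(C,r) }`. -/
theorem limsup_levelSum_le
    {N : ℕ} (hN : 0 < N) {X : Type*} [MetricSpace X]
    (Λ : Seq N → ℝ) (hΛcont : Continuous Λ)
    (cmin cmax : ℝ) (hcmax : cmax < 0) (hccmin : cmin ≤ cmax)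
    (hΛbdd : ∀ x, Λ x ∈ Set.Icc cmin cmax)
    (c : ℝ) (hc : 1 ≤ c) (hdist : BddDistortion Λ c)
    (U : ProbabilityMeasure (Seq N) → X) (hU : Continuous U)
    (C : Set X) (hC : IsClosed C) (r : ℝ) (hr : 0 < r) (t : ℝ) :
    Filter.limsup (fun n : ℕ => logDivE (levelSum Λ U (cball C r) t n) n) Filter.atTop
      ≤ sSup {x : EReal | ∃ μ : ProbabilityMeasure (Seq N), Invariant μ ∧ U μ ∈ cball C r ∧
          x = ((t * ∫ y, Λ y ∂μ.toMeasure + entropy μ : ℝ) : EReal)} :=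
  limsup_levelSum_le_general hΛcont hU (isClosed_cball C r) t

end Multifractal
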